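/- Let R be an associative unital ring. Let u : ℤ³ → R and let φ : ℤ³ → R take unit values, written φ_n(j,r), and satisfy φ_n(j, r−1) = φ_n(j, r) + u(n,j,r)·φ_{n−1}(j, r) for all n, j, r. Set σ(n,j,r) := φ_n(j,r)·φ_{n−1}(j,r)⁻¹ and u⁻(n,j,r) := u(n,j,r) − σ(n,j,r−1) + σ(n,j,r). Then for all n, j, r: u⁻(n,j,r)·σ(n−1,j,r) = σ(n,j,r−1)·u(n−1,j,r). -/

import Mathlib

/-!
Writing `τ` for `n ↦ n - 1` and `ρ` for `r ↦ r - 1`, the equation for `φ` determines the potential,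
`u = (φ ∘ ρ - φ) · (φ ∘ τ)⁻¹`, and turns the transformed one into a difference of inverses,
`u⁻ = φ ∘ ρ · ((φ ∘ τ)⁻¹ - (φ ∘ τ ∘ ρ)⁻¹)`. Expanding that difference as `B⁻¹ (B - b) b⁻¹` produces
the numerator of `u ∘ τ`, because `τ` and `ρ` commute.
-/

namespace LatticeDarboux

variable {R X : Type*} [Ring R]

theorem units_inv_sub_inv (a b : Rˣ) :
    (↑a⁻¹ - ↑b⁻¹ : R) = ↑b⁻¹ * (b - a) * ↑a⁻¹ := by
  rw [mul_sub, sub_mul, Units.inv_mul, one_mul, Units.mul_inv_cancel_right]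

variable {τ ρ : X → X} {u : X → R} {φ : X → Rˣ}

/-- The dressing factor `σ = φ · (φ ∘ τ)⁻¹` of the Darboux transformation of the second kind.
The lattice is an arbitrary type of sites, and `τ` plays the role of the backward shift
`n ↦ n - 1`. -/
def dressingFactor (τ : X → X) (φ : X → Rˣ) (x : X) : R :=
  φ x * ↑(φ (τ x))⁻¹

/-- The Darboux-transformed potential `u⁻ = u - σ ∘ ρ + σ`, where `σ` is the dressing factor of `φ`
and `ρ` plays the role of the backward shift `r ↦ r - 1`. -/
def transformedPotential (τ ρ : X → X) (u : X → R) (φ : X → Rˣ) (x : X) : R :=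
  u x - dressingFactor τ φ (ρ x) + dressingFactor τ φ x

theorem potential_eq_sub_mul_inv {x : X} (hx : (φ (ρ x) : R) = φ x + u x * φ (τ x)) :
    u x = (φ (ρ x) - φ x) * ↑(φ (τ x))⁻¹ := by
  rw [Units.eq_mul_inv_iff_mul_eq, hx, add_sub_cancel_left]

theorem transformedPotential_eq_mul_inv_sub_inv {x : X}
    (hx : (φ (ρ x) : R) = φ x + u x * φ (τ x)) :
    transformedPotential τ ρ u φ x = φ (ρ x) * (↑(φ (τ x))⁻¹ - ↑(φ (τ (ρ x)))⁻¹) := by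
  rw [transformedPotential, dressingFactor, dressingFactor, potential_eq_sub_mul_inv hx, sub_mul,
    mul_sub]
  abel

end LatticeDarboux

open LatticeDarboux in
theorem lattice_darboux_second_covariance_condition_general {R X : Type*} [Ring R] {τ ρ : X → X}
    (hτρ : Function.Commute τ ρ) (u : X → R) (φ : X → Rˣ)
    (hφ : ∀ x, (φ (ρ x) : R) = φ x + u x * φ (τ x)) (x : X) :
    transformedPotential τ ρ u φ x * dressingFactor τ φ (τ x) =
      dressingFactor τ φ (ρ x) * u (τ x) :=
  calc
    transformedPotential τ ρ u φ x * dressingFactor τ φ (τ x)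
      = φ (ρ x) * (↑(φ (τ (ρ x)))⁻¹ * ((φ (τ (ρ x)) : R) - φ (τ x)) * ↑(φ (τ x))⁻¹) *
          (φ (τ x) * ↑(φ (τ (τ x)))⁻¹) := by
      rw [transformedPotential_eq_mul_inv_sub_inv (hφ x), units_inv_sub_inv, dressingFactor]
    _ = φ (ρ x) * ↑(φ (τ (ρ x)))⁻¹ * (((φ (τ (ρ x)) : R) - φ (τ x)) * ↑(φ (τ (τ x)))⁻¹) := by
      simp only [mul_assoc, Units.inv_mul_cancel_left]
    _ = dressingFactor τ φ (ρ x) * u (τ x) := by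
      rw [potential_eq_sub_mul_inv (hφ (τ x)), ← hτρ x, dressingFactor]

/-- For the lattice equation `f_n(j,r−1) = f_n(j,r) + u(n,j,r)·f_{n−1}(j,r)`
with a unit-valued particular solution `φ`, dressing factor
`σ(n,j,r) = φ_n(j,r)·φ_{n−1}(j,r)⁻¹` and transformed potential
`u⁻(n,j,r) = u(n,j,r) − σ(n,j,r−1) + σ(n,j,r)`, the second covariance condition
`u⁻(n,j,r)·σ(n−1,j,r) = σ(n,j,r−1)·u(n−1,j,r)` holds. -/
theorem lattice_darboux_second_covariance_condition {R : Type*} [Ring R]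
    (u : ℤ → ℤ → ℤ → R) (φ : ℤ → ℤ → ℤ → Rˣ)
    (hφ : ∀ n j r : ℤ, (φ n j (r - 1) : R)
      = (φ n j r : R) + u n j r * (φ (n - 1) j r : R))
    (σ : ℤ → ℤ → ℤ → R)
    (hσ : ∀ n j r, σ n j r = (φ n j r : R) * (((φ (n - 1) j r)⁻¹ : Rˣ) : R))
    (um : ℤ → ℤ → ℤ → R)
    (hum : ∀ n j r, um n j r = u n j r - σ n j (r - 1) + σ n j r) :
    ∀ n j r : ℤ, um n j r * σ (n - 1) j r = σ n j (r - 1) * u (n - 1) j r := by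
  intro n j r
  simp only [hum, hσ]
  exact lattice_darboux_second_covariance_condition_general
    (τ := Prod.map (· - 1) id) (ρ := Prod.map id (· - 1)) (fun _ ↦ rfl)
    (fun p ↦ u p.1 j p.2) (fun p ↦ φ p.1 j p.2) (fun p ↦ hφ p.1 j p.2) (n, r)
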